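/- Let Φ ⊆ ℝ^m be a nonempty closed convex set, let V : ℝ^m → ℝ be differentiable with L_V-Lipschitz gradient (L_V > 0) and bounded below on Φ with V* := inf_{φ∈Φ} V(φ). Let δ ≥ 0, φ₀ ∈ Φ, and for k = 0, …, K−1 let g_k ∈ ℝ^m satisfy ‖g_k − ∇V(φ_k)‖ ≤ δ and set φ_{k+1} := proj_Φ(φ_k − η g_k) with step size η = 1/(4L_V). Then there exist k ∈ {0, …, K−1} and a vector v in the normal cone of Φ at φ_{k+1} such that ‖∇V(φ_{k+1}) + v‖² ≤ 50·L_V·(V(φ₀) − V*)/K + 27·δ². -/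

import Mathlib

open scoped RealInnerProductSpace

lemma descent_aux {E : Type*} [NormedAddCommGroup E] [InnerProductSpace ℝ E] [CompleteSpace E]
    (V : E → ℝ) (V' : E → E) (hdiff : ∀ x, HasGradientAt V (V' x) x)
    (L : ℝ) (hL : 0 < L) (hLip : ∀ x y, ‖V' x - V' y‖ ≤ L * ‖x - y‖) (x y : E) :
    V y ≤ V x + ⟪V' x, y - x⟫ + L * ‖y - x‖ ^ 2 := by
  have h := (convex_segment (𝕜 := ℝ) x y).norm_image_sub_le_of_norm_hasFDerivWithin_le'
    (f := V) (f' := fun z => InnerProductSpace.toDual ℝ E (V' z))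
    (φ := InnerProductSpace.toDual ℝ E (V' x)) (C := L * ‖y - x‖) (x := x) (y := y)
    (fun z _ => (hdiff z).hasFDerivAt.hasFDerivWithinAt)
    (fun z hz => by
      rw [← map_sub, LinearIsometryEquiv.norm_map]
      refine (hLip z x).trans (mul_le_mul_of_nonneg_left ?_ hL.le)
      exact norm_sub_le_of_mem_segment hz)
    (left_mem_segment ℝ x y) (right_mem_segment ℝ x y)
  rw [InnerProductSpace.toDual_apply_apply, Real.norm_eq_abs] at h
  have := (abs_le.1 h).2
  nlinarith

/-- improved complexity under smoothness. For the inexact projected gradient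
method with step size η = 1/(4L_V) and gradient inexactness δ, some iterate φ_{k+1} admits
a normal-cone vector v with ‖∇V(φ_{k+1}) + v‖² ≤ 50·L_V·(V(φ₀) − V*)/K + 27·δ². -/
theorem inexact_projected_gradient_complexity {m : ℕ} (Φ : Set (EuclideanSpace ℝ (Fin m)))
    (hne : Φ.Nonempty) (hcl : IsClosed Φ) (hΦ : Convex ℝ Φ)
    (V : EuclideanSpace ℝ (Fin m) → ℝ)
    (V' : EuclideanSpace ℝ (Fin m) → EuclideanSpace ℝ (Fin m))
    (hdiff : ∀ x, HasGradientAt V (V' x) x)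
    (L_V : ℝ) (hLV : 0 < L_V)
    (hLip : ∀ x y, ‖V' x - V' y‖ ≤ L_V * ‖x - y‖)
    (hbdd : BddBelow (V '' Φ))
    (δ : ℝ) (hδ : 0 ≤ δ) (K : ℕ) (hK : 1 ≤ K)
    (φ : ℕ → EuclideanSpace ℝ (Fin m)) (g : ℕ → EuclideanSpace ℝ (Fin m))
    (hφ0 : φ 0 ∈ Φ)
    (hg : ∀ k < K, ‖g k - V' (φ k)‖ ≤ δ)
    (hproj : ∀ k < K, φ (k + 1) ∈ Φ ∧ ∀ y ∈ Φ,
      ‖φ (k + 1) - (φ k - (1 / (4 * L_V)) • g k)‖ ≤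
        ‖y - (φ k - (1 / (4 * L_V)) • g k)‖) :
    ∃ k < K, ∃ v : EuclideanSpace ℝ (Fin m),
      (∀ y ∈ Φ, ⟪v, y - φ (k + 1)⟫ ≤ 0) ∧
      ‖V' (φ (k + 1)) + v‖ ^ 2 ≤
        50 * L_V * (V (φ 0) - sInf (V '' Φ)) / K + 27 * δ ^ 2 := by
  have hmem : ∀ k ≤ K, φ k ∈ Φ := by
    intro k hk
    cases k with
    | zero => exact hφ0
    | succ n => exact (hproj n (by omega)).1
  have hK0 : (0 : ℝ) < K := by exact_mod_cast hK
  have hinf : sInf (V '' Φ) ≤ V (φ K) := csInf_le hbdd ⟨_, hmem K le_rfl, rfl⟩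
  obtain ⟨k, hk, hkle⟩ : ∃ k ∈ Finset.range K,
      V (φ k) - V (φ (k + 1)) ≤ (V (φ 0) - sInf (V '' Φ)) / K := by
    apply Finset.exists_le_of_sum_le (Finset.nonempty_range_iff.2 (by omega))
    rw [Finset.sum_range_sub', Finset.sum_const, Finset.card_range, nsmul_eq_mul,
      mul_div_cancel₀ _ hK0.ne']
    linarith
  have hk : k < K := Finset.mem_range.1 hk
  obtain ⟨hm1, hp⟩ := hproj k hk
  have hgk := hg k hk
  set u := φ k - (1 / (4 * L_V)) • g k with hu
  have hnc : ∀ y ∈ Φ, ⟪u - φ (k + 1), y - φ (k + 1)⟫ ≤ 0 := by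
    rw [← norm_eq_iInf_iff_real_inner_le_zero hΦ hm1]
    haveI : Nonempty Φ := hne.to_subtype
    apply le_antisymm
    · apply le_ciInf
      intro w
      rw [norm_sub_rev, norm_sub_rev u]
      exact hp w w.2
    · exact ciInf_le ⟨0, by rintro _ ⟨w, rfl⟩; exact norm_nonneg _⟩ (⟨_, hm1⟩ : Φ)
  have hv : (4 * L_V) • (u - φ (k + 1)) = -((4 * L_V) • (φ (k + 1) - φ k)) - g k := by
    have : (4 * L_V) • (1 / (4 * L_V)) • g k = g k := by
      rw [smul_smul, mul_one_div_cancel (by positivity), one_smul]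
    rw [hu, smul_sub, smul_sub, this, smul_sub]
    abel
  have hnc' : ∀ y ∈ Φ, ⟪(4 * L_V) • (u - φ (k + 1)), y - φ (k + 1)⟫ ≤ 0 := by
    intro y hy
    rw [real_inner_smul_left]
    exact mul_nonpos_of_nonneg_of_nonpos (by positivity) (hnc y hy)
  refine ⟨k, hk, (4 * L_V) • (u - φ (k + 1)), hnc', ?_⟩
  have h1 := hnc' (φ k) (hmem k hk.le)
  have hdesc := descent_aux V V' hdiff L_V hLV hLip (φ k) (φ (k + 1))
  have hl := hLip (φ (k + 1)) (φ k)
  rw [hv] at h1 ⊢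
  rw [← neg_sub (φ (k + 1)) (φ k)] at h1
  set d := φ (k + 1) - φ k with hd
  have hcs : -⟪g k - V' (φ k), d⟫ ≤ δ * ‖d‖ :=
    (neg_le_abs _).trans ((abs_real_inner_le_norm _ _).trans
      (mul_le_mul_of_nonneg_right hgk (norm_nonneg _)))
  rw [inner_sub_left] at hcs
  rw [inner_neg_right, inner_sub_left, inner_neg_left, real_inner_smul_left,
    real_inner_self_eq_norm_sq] at h1
  have hnorm : ‖V' (φ (k + 1)) + (-((4 * L_V) • d) - g k)‖ ≤ 5 * (L_V * ‖d‖) + δ := by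
    have e : V' (φ (k + 1)) + (-((4 * L_V) • d) - g k)
        = (V' (φ (k + 1)) - V' (φ k)) - (4 * L_V) • d - (g k - V' (φ k)) := by abel
    rw [e]
    refine (norm_sub_le _ _).trans (add_le_add ((norm_sub_le _ _).trans ?_) hgk)
    rw [norm_smul, Real.norm_of_nonneg (by positivity)]
    linarith
  have hsq := pow_le_pow_left₀ (norm_nonneg _) hnorm 2
  have hfin : 3 * L_V * ‖d‖ ^ 2 - δ * ‖d‖ ≤ (V (φ 0) - sInf (V '' Φ)) / K := by linarith
  have hfin2 := mul_le_mul_of_nonneg_left hfin (by positivity : 0 ≤ 50 * L_V)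
  rw [mul_div_assoc]
  nlinarith [sq_nonneg (5 * (L_V * ‖d‖) - 3 * δ), sq_nonneg (L_V * ‖d‖), sq_nonneg δ,
    sq_nonneg (2 * (L_V * ‖d‖) - δ)]
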